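/- Let R be a coherent commutative ring, 𝔗 a torsion theory over R, 𝔞 a finitely generated ideal of R, and M an R-module. Then 𝔗-Kgrade_R(𝔞,M) = 𝔗-Egrade_R(𝔞,M). -/

import Mathlib

open CategoryTheory

universe u

noncomputable section

/-- A torsion theory over `R`: a class of `R`-modules closed under isomorphism, submodules,
quotient modules, extensions, and directed colimits (formulated as closure under directed
unions of submodules). -/
structure IsTorsionTheory (R : Type u) [CommRing R] (T : Set (ModuleCat.{u} R)) : Prop where
  mem_of_iso : ∀ {N N' : ModuleCat.{u} R}, (N ≅ N') → N ∈ T → N' ∈ T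
  submodule_mem : ∀ {N : ModuleCat.{u} R}, N ∈ T → ∀ S : Submodule R N,
    ModuleCat.of R S ∈ T
  quotient_mem : ∀ {N : ModuleCat.{u} R}, N ∈ T → ∀ S : Submodule R N,
    ModuleCat.of R (N ⧸ S) ∈ T
  ext_mem : ∀ {N : ModuleCat.{u} R} (S : Submodule R N),
    ModuleCat.of R S ∈ T → ModuleCat.of R (N ⧸ S) ∈ T → N ∈ T
  directed_mem : ∀ {N : ModuleCat.{u} R} {ι : Type u} [Nonempty ι] (S : ι → Submodule R N),
    Directed (· ≤ ·) S → (∀ i, ModuleCat.of R (S i) ∈ T) → iSup S = ⊤ → N ∈ T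

variable {R : Type u} [CommRing R]

/-- The "outgoing" differential of the Koszul cocomplex `Hom_R(K_•(x), M)`, whose degree `i`
component is indexed by the `i`-element subsets of `{1, …, r}`. -/
def koszulDiff {r : ℕ} (x : Fin r → R) (M : Type u) [AddCommGroup M] [Module R M] (i : ℕ) :
    ({s : Finset (Fin r) // s.card = i} → M) →ₗ[R]
      ({s : Finset (Fin r) // s.card = i + 1} → M) where
  toFun φ t := ∑ j ∈ t.1.attach,
    ((-1 : R) ^ (t.1.filter (fun k => k < j.1)).card * x j.1) •
      φ ⟨t.1.erase j.1, by simp [Finset.card_erase_of_mem j.2, t.2]⟩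
  map_add' φ ψ := by
    funext t
    simp [Finset.sum_add_distrib, smul_add]
  map_smul' c φ := by
    funext t
    simp [Finset.smul_sum, smul_comm c]

/-- The "incoming" differential of the Koszul cocomplex in degree `i`
(its source is trivial when `i = 0`). -/
def koszulDiffIn {r : ℕ} (x : Fin r → R) (M : Type u) [AddCommGroup M] [Module R M] (i : ℕ) :
    ({s : Finset (Fin r) // s.card + 1 = i} → M) →ₗ[R]
      ({s : Finset (Fin r) // s.card = i} → M) where
  toFun φ t := ∑ j ∈ t.1.attach,
    ((-1 : R) ^ (t.1.filter (fun k => k < j.1)).card * x j.1) •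
      φ ⟨t.1.erase j.1, by rw [Finset.card_erase_add_one j.2]; exact t.2⟩
  map_add' φ ψ := by
    funext t
    simp [Finset.sum_add_distrib, smul_add]
  map_smul' c φ := by
    funext t
    simp [Finset.smul_sum, smul_comm c]

/-- The `i`-th Koszul cohomology `H^i(x; M)` of `M` with respect to `x₁, …, x_r`, i.e. the
`i`-th cohomology of the cocomplex `Hom_R(K_•(x), M)`. -/
abbrev koszulCohomology {r : ℕ} (x : Fin r → R) (M : Type u) [AddCommGroup M] [Module R M]
    (i : ℕ) : Type u :=
  ↥(LinearMap.ker (koszulDiff x M i)) ⧸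
    (Submodule.comap (LinearMap.ker (koszulDiff x M i)).subtype
      (LinearMap.range (koszulDiffIn x M i)))

/-- The `𝔗`-Koszul grade of the ideal `(x₁, …, x_r)` on `M`: the infimum of the set of `i`
such that `H^i(x; M) ∉ 𝔗` (with `inf ∅ = +∞`). -/
def TKgrade (T : Set (ModuleCat.{u} R)) {r : ℕ} (x : Fin r → R) (M : Type u)
    [AddCommGroup M] [Module R M] : ℕ∞ :=
  sInf ((↑· : ℕ → ℕ∞) '' {i | ModuleCat.of R (koszulCohomology x M i) ∉ T})

/-- A commutative ring is coherent if every finitely generated ideal is finitely presented. -/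
def IsCoherentRing (R : Type u) [CommRing R] : Prop :=
  ∀ I : Ideal R, I.FG → Module.FinitePresentation R I

/-- The `𝔗`-Ext grade of `𝔞` on `M`: the infimum of the set of `i` such that
`Ext^i_R(R/𝔞, M) ∉ 𝔗` (with `inf ∅ = +∞`). -/
def TEgrade (T : Set (ModuleCat.{u} R)) (a : Ideal R) (M : Type u)
    [AddCommGroup M] [Module R M] : ℕ∞ :=
  sInf ((↑· : ℕ → ℕ∞) '' {i | ((Ext R (ModuleCat.{u} R) i).obj
    (Opposite.op (ModuleCat.of R (R ⧸ a)))).obj (ModuleCat.of R M) ∉ T})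

/-!
A chain complex `K` of projectives is compared with its homology by splitting the maps
`K_i / d K_{i+1} → K_{i-1}` into kernel, image and cokernel and shifting dimensions along the
pieces. Modulo a Serre class, `H^i(Hom(K, M))` vanishes for `i < n` as soon as `Ext^p(H_q(K), M)`
does for `p + q < n`; conversely, if `H^i(Hom(K, M))` vanishes for `i < n`, and `Ext^p(H_q(K), M)`
for `q > 0` and `p + q + 1 < n`, then `Ext^p(H_0(K), M)` vanishes for `p < n`.

Let `K` be the Koszul complex of generators of `𝔞`. Its homology is `R / 𝔞` in degree zero, is
killed by `𝔞` because multiplication by each generator is null-homotopic, and is finitely presented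
because `R` is coherent. A finitely presented module `N` killed by `𝔞` is covered by a power of
`R / 𝔞`, with a kernel of the same kind, so `Ext^p(N, M)` vanishes for `p < n`, modulo the Serre
class, whenever `Ext^p(R / 𝔞, M)` does. Applied to the homology of `K`, this controls every
`Ext^p(H_q(K), M)`, and the converse direction closes by induction on `n`.
-/

section SerreClass

variable (P : ObjectProperty (ModuleCat.{u} R)) [P.IsSerreClass]
  {A B C : Type u} [AddCommGroup A] [Module R A] [AddCommGroup B] [Module R B]
  [AddCommGroup C] [Module R C]

lemma prop_of_injective (f : A →ₗ[R] B) (hf : Function.Injective f)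
    (hB : P (ModuleCat.of R B)) : P (ModuleCat.of R A) :=
  have : Mono (ModuleCat.ofHom f) := (ModuleCat.mono_iff_injective _).2 hf
  P.prop_of_mono (ModuleCat.ofHom f) hB

lemma prop_of_surjective (f : A →ₗ[R] B) (hf : Function.Surjective f)
    (hA : P (ModuleCat.of R A)) : P (ModuleCat.of R B) :=
  have : Epi (ModuleCat.ofHom f) := (ModuleCat.epi_iff_surjective _).2 hf
  P.prop_of_epi (ModuleCat.ofHom f) hA

lemma prop_of_ker_le_range (f : A →ₗ[R] B) (g : B →ₗ[R] C)
    (h : LinearMap.ker g ≤ LinearMap.range f)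
    (hA : P (ModuleCat.of R A)) (hC : P (ModuleCat.of R C)) : P (ModuleCat.of R B) := by
  have hker : P (ModuleCat.of R (LinearMap.ker g)) :=
    prop_of_injective P (Submodule.inclusion h) (Submodule.inclusion_injective h)
      (prop_of_surjective P f.rangeRestrict f.surjective_rangeRestrict hA)
  exact P.prop_X₂_of_exact (S := .moduleCatMk (LinearMap.ker g).subtype g g.comp_ker_subtype)
    ((ShortComplex.moduleCat_exact_iff_range_eq_ker _).2 (LinearMap.ker g).range_subtype) hker hC

end SerreClass

namespace IsTorsionTheory

variable {T : Set (ModuleCat.{u} R)} (hT : IsTorsionTheory R T)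
include hT

lemma mem_of_mono {N N' : ModuleCat.{u} R} (f : N ⟶ N') [Mono f] (h : N' ∈ T) : N ∈ T :=
  hT.mem_of_iso
    (LinearEquiv.ofInjective f.hom ((ModuleCat.mono_iff_injective f).1 ‹_›)).symm.toModuleIso
    (hT.submodule_mem h _)

lemma mem_of_epi {N N' : ModuleCat.{u} R} (f : N ⟶ N') [Epi f] (h : N ∈ T) : N' ∈ T :=
  hT.mem_of_iso
    (f.hom.quotKerEquivOfSurjective ((ModuleCat.epi_iff_surjective f).1 ‹_›)).toModuleIso
    (hT.quotient_mem h _)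

lemma mem_of_shortExact {S : ShortComplex (ModuleCat.{u} R)} (hS : S.ShortExact)
    (h₁ : S.X₁ ∈ T) (h₃ : S.X₃ ∈ T) : S.X₂ ∈ T := by
  have := hS.mono_f
  let e₁ : S.X₁ ≃ₗ[R] LinearMap.ker S.g.hom :=
    (LinearEquiv.ofInjective S.f.hom hS.moduleCat_injective_f).trans
      (LinearEquiv.ofEq _ _ hS.exact.moduleCat_range_eq_ker)
  let e₃ := S.g.hom.quotKerEquivOfSurjective hS.moduleCat_surjective_g
  exact hT.ext_mem (LinearMap.ker S.g.hom) (hT.mem_of_iso e₁.toModuleIso h₁)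
    (hT.mem_of_iso e₃.symm.toModuleIso h₃)

lemma isSerreClass (hne : T.Nonempty) :
    ObjectProperty.IsSerreClass (fun N : ModuleCat.{u} R => N ∈ T) where
  exists_zero :=
    have ⟨N, hN⟩ := hne
    have h0 := Limits.isZero_zero (ModuleCat.{u} R)
    have : Mono (h0.to_ N) := h0.mono _
    ⟨_, h0, hT.mem_of_mono (h0.to_ N) hN⟩
  prop_of_mono f _ := hT.mem_of_mono f
  prop_of_epi f _ := hT.mem_of_epi f
  prop_X₂_of_shortExact := hT.mem_of_shortExact

end IsTorsionTheory

section ImageFactorization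

open Limits

variable {C : Type*} [Category C] [Abelian C] {A B : C} (f : A ⟶ B)

/-- The first half of the canonical factorization of `f`: the complex `ker f → A → im f`. -/
abbrev kernelImageComplex : ShortComplex C :=
  .mk (kernel.ι f) (factorThruImage f) (by simp [← cancel_mono (image.ι f)])

/-- The second half of the canonical factorization of `f`: the complex `im f → B → coker f`. -/
abbrev imageCokernelComplex : ShortComplex C :=
  .mk (image.ι f) (cokernel.π f) (by simp [← cancel_epi (factorThruImage f)])

lemma kernelImageComplex_shortExact : (kernelImageComplex f).ShortExact where
  exact :=
    let φ : kernelImageComplex f ⟶ .mk (kernel.ι f) f (kernel.condition f) :=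
      { τ₁ := 𝟙 _, τ₂ := 𝟙 _, τ₃ := image.ι f }
    (ShortComplex.exact_iff_of_epi_of_isIso_of_mono φ).2 (ShortComplex.exact_kernel f)

lemma imageCokernelComplex_shortExact : (imageCokernelComplex f).ShortExact where
  exact :=
    let φ : .mk f (cokernel.π f) (cokernel.condition f) ⟶ imageCokernelComplex f :=
      { τ₁ := factorThruImage f, τ₂ := 𝟙 _, τ₃ := 𝟙 _ }
    (ShortComplex.exact_iff_of_epi_of_isIso_of_mono φ).1 (ShortComplex.exact_cokernel f)

end ImageFactorization

section Ext

open Limits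
open Abelian (Ext)
open Abelian.Ext

universe v w

variable {C : Type w} [Category.{v} C] [Abelian C] [Linear R C] [HasExt.{u} C]

/-- `Ext^n(A, M)` as an `R`-module. -/
abbrev extModule (R : Type u) [CommRing R] [Linear R C] (A M : C) (n : ℕ) : ModuleCat.{u} R :=
  ModuleCat.of R (Ext A M n)

/-- The pullback map `f^* : Ext^n(B, M) → Ext^n(A, M)`. -/
abbrev extPullback (R : Type u) [CommRing R] [Linear R C] {A B : C} (f : A ⟶ B) (M : C) (n : ℕ) :
    Ext B M n →ₗ[R] Ext A M n :=
  (mk₀ f).precompOfLinear R M (zero_add n)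

lemma extPullback_comp {A B D : C} (f : A ⟶ B) (g : B ⟶ D) (M : C) (n : ℕ) :
    extPullback R (f ≫ g) M n = extPullback R f M n ∘ₗ extPullback R g M n := by
  ext x
  simp

variable (P : ObjectProperty (ModuleCat.{u} R)) [P.IsSerreClass] {M : C}

lemma prop_extModule_of_iso {A B : C} (e : A ≅ B) {n : ℕ} (h : P (extModule R A M n)) :
    P (extModule R B M n) := by
  refine prop_of_injective P (extPullback R e.hom M n) (fun x y hxy => ?_) h
  simpa using congrArg (extPullback R e.inv M n) hxy

lemma prop_extModule_of_isZero {A : C} (hA : IsZero A) {n : ℕ} : P (extModule R A M n) := by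
  have : Subsingleton (Ext A M n) := subsingleton_of_forall_eq 0 fun φ => by
    rw [← mk₀_id_comp φ, hA.eq_of_src (𝟙 A) 0, mk₀_zero, Ext.zero_comp]
  exact P.prop_of_isZero (ModuleCat.isZero_of_subsingleton _)

section LongExactSequence

variable {S : ShortComplex C} (hS : S.ShortExact)
include hS

/-- The connecting map `Ext^n(X₁, M) → Ext^{n+1}(X₃, M)` of a short exact sequence. -/
abbrev extConnecting (R : Type u) [CommRing R] [Linear R C] (M : C) (n : ℕ) :
    Ext S.X₁ M n →ₗ[R] Ext S.X₃ M (n + 1) :=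
  hS.extClass.precompOfLinear R M (add_comm 1 n)

lemma range_extPullback_f (M : C) (n : ℕ) :
    LinearMap.range (extPullback R S.f M n) = LinearMap.ker (extConnecting hS R M n) := by
  refine le_antisymm ?_ fun x hx => contravariant_sequence_exact₁ hS M x (add_comm 1 n) hx
  rintro _ ⟨x, rfl⟩
  simp

lemma ker_extPullback_f_le (M : C) (n : ℕ) :
    LinearMap.ker (extPullback R S.f M n) ≤ LinearMap.range (extPullback R S.g M n) :=
  fun x hx => contravariant_sequence_exact₂ hS M x hx

lemma ker_extPullback_g_zero (M : C) : LinearMap.ker (extPullback R S.g M 0) = ⊥ :=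
  have := hS.epi_g
  LinearMap.ker_eq_bot.2 (precomp_mk₀_injective_of_epi M S.g)

lemma ker_extPullback_g_succ_le (M : C) (n : ℕ) :
    LinearMap.ker (extPullback R S.g M (n + 1)) ≤ LinearMap.range (extConnecting hS R M n) :=
  fun x hx => contravariant_sequence_exact₃ hS M x hx (add_comm 1 n)

lemma prop_extModule_X₂ {n : ℕ} (h₁ : P (extModule R S.X₁ M n)) (h₃ : P (extModule R S.X₃ M n)) :
    P (extModule R S.X₂ M n) :=
  prop_of_ker_le_range P _ _ (ker_extPullback_f_le hS M n) h₃ h₁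

lemma prop_extModule_X₃_zero (h₂ : P (extModule R S.X₂ M 0)) : P (extModule R S.X₃ M 0) :=
  prop_of_injective P _ (LinearMap.ker_eq_bot.1 (ker_extPullback_g_zero hS M)) h₂

lemma prop_extModule_X₃_succ {n : ℕ} (h₁ : P (extModule R S.X₁ M n))
    (h₂ : P (extModule R S.X₂ M (n + 1))) : P (extModule R S.X₃ M (n + 1)) :=
  prop_of_ker_le_range P _ _ (ker_extPullback_g_succ_le hS M n) h₁ h₂

end LongExactSequence

section PullbackCokernel

variable {A B : C}

/-- The cokernel of `f^* : Ext^n(B, M) → Ext^n(A, M)`. For `n = 0` and the map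
`f : K_i / d K_{i+1} → K_{i-1}` induced by a complex `K`, it is the cohomology
`H^i(Hom(K, M))`; for positive `n` and projective `B` it is `Ext^n(A, M)`. -/
abbrev extPullbackCoker (R : Type u) [CommRing R] [Linear R C] (f : A ⟶ B) (M : C) (n : ℕ) :
    ModuleCat.{u} R :=
  ModuleCat.of R (Ext A M n ⧸ LinearMap.range (extPullback R f M n))

variable {f : A ⟶ B}

lemma prop_extPullbackCoker {n : ℕ} (h : P (extModule R A M n)) : P (extPullbackCoker R f M n) :=
  prop_of_surjective P _ (Submodule.mkQ_surjective _) h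

lemma prop_extModule_of_extPullback_eq_zero {n : ℕ} (hf : extPullback R f M n = 0)
    (h : P (extPullbackCoker R f M n)) : P (extModule R A M n) :=
  prop_of_injective P (LinearMap.range (extPullback R f M n)).mkQ
    (LinearMap.ker_eq_bot.1 (by rw [Submodule.ker_mkQ, hf, LinearMap.range_zero])) h

lemma extPullback_eq_comp_image (f : A ⟶ B) (M : C) (n : ℕ) :
    extPullback R f M n =
      extPullback R (factorThruImage f) M n ∘ₗ extPullback R (image.ι f) M n := by
  rw [← extPullback_comp, image.fac]

variable (R) in
/-- The map `Ext^n(im f, M) / Ext^n(B, M) → Ext^n(A, M) / Ext^n(B, M)` induced by `A ↠ im f`. -/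
def extCokerFactorThruImage (f : A ⟶ B) (M : C) (n : ℕ) :
    extPullbackCoker R (image.ι f) M n →ₗ[R] extPullbackCoker R f M n :=
  Submodule.mapQ _ _ (extPullback R (factorThruImage f) M n) (by
    rw [← Submodule.map_le_iff_le_comap, ← LinearMap.range_comp, ← extPullback_eq_comp_image])

lemma ker_extCokerFactorThruImage (f : A ⟶ B) (M : C) (n : ℕ) :
    LinearMap.ker (extCokerFactorThruImage R f M n) =
      (LinearMap.ker (extPullback R (factorThruImage f) M n)).map (Submodule.mkQ _) := by
  have hcomap : (LinearMap.range (extPullback R f M n)).comap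
      (extPullback R (factorThruImage f) M n) =
      LinearMap.range (extPullback R (image.ι f) M n) ⊔
        LinearMap.ker (extPullback R (factorThruImage f) M n) := by
    rw [extPullback_eq_comp_image f, LinearMap.range_comp, Submodule.comap_map_eq]
  rw [extCokerFactorThruImage, Submodule.ker_mapQ, hcomap, Submodule.map_sup,
    Submodule.mkQ_map_self, bot_sup_eq]

variable (R) in
/-- The map `Ext^n(A, M) / Ext^n(B, M) → Ext^n(ker f, M)` induced by `ker f ↪ A`. -/
def extCokerKernelι (f : A ⟶ B) (M : C) (n : ℕ) :
    extPullbackCoker R f M n →ₗ[R] Ext (kernel f) M n :=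
  (LinearMap.range _).liftQ (extPullback R (kernel.ι f) M n) (by
    rw [LinearMap.range_le_ker_iff, ← extPullback_comp, kernel.condition]
    ext x
    simp)

lemma ker_extCokerKernelι_le (f : A ⟶ B) (M : C) (n : ℕ) :
    LinearMap.ker (extCokerKernelι R f M n) ≤
      LinearMap.range (extCokerFactorThruImage R f M n) := by
  rw [extCokerKernelι, extCokerFactorThruImage, Submodule.ker_liftQ, Submodule.range_mapQ]
  exact Submodule.map_mono (ker_extPullback_f_le (kernelImageComplex_shortExact f) M n)

variable (R) in
/-- The injection `Ext^n(im f, M) / Ext^n(B, M) ↪ Ext^{n+1}(coker f, M)` of the long exact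
sequence of `0 → im f → B → coker f → 0`. -/
def extCokerConnecting (f : A ⟶ B) (M : C) (n : ℕ) :
    extPullbackCoker R (image.ι f) M n →ₗ[R] Ext (cokernel f) M (n + 1) :=
  (LinearMap.range _).liftQ (extConnecting (imageCokernelComplex_shortExact f) R M n)
    (range_extPullback_f (imageCokernelComplex_shortExact f) M n).le

lemma extCokerConnecting_injective (f : A ⟶ B) (M : C) (n : ℕ) :
    Function.Injective (extCokerConnecting R f M n) :=
  LinearMap.ker_eq_bot.1 (Submodule.ker_liftQ_eq_bot _ _ _
    (range_extPullback_f (imageCokernelComplex_shortExact f) M n).ge)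

lemma extCokerConnecting_surjective (f : A ⟶ B) [Projective B] (M : C) (n : ℕ) :
    Function.Surjective (extCokerConnecting R f M n) := by
  rw [← LinearMap.range_eq_top, extCokerConnecting, Submodule.range_liftQ, eq_top_iff]
  exact fun x _ => ker_extPullback_g_succ_le (imageCokernelComplex_shortExact f) M n
    (eq_zero_of_projective _)

lemma prop_extPullbackCoker_of_kernel_cokernel {n : ℕ} (hker : P (extModule R (kernel f) M n))
    (hcoker : P (extModule R (cokernel f) M (n + 1))) : P (extPullbackCoker R f M n) :=
  prop_of_ker_le_range P _ _ (ker_extCokerKernelι_le f M n)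
    (prop_of_injective P _ (extCokerConnecting_injective f M n) hcoker) hker

lemma prop_extModule_cokernel [Projective B] {n : ℕ}
    (hker : ∀ k, k + 1 = n → P (extModule R (kernel f) M k))
    (hf : P (extPullbackCoker R f M n)) : P (extModule R (cokernel f) M (n + 1)) := by
  suffices himage : P (extPullbackCoker R (image.ι f) M n) from
    prop_of_surjective P _ (extCokerConnecting_surjective f M n) himage
  have hπ := kernelImageComplex_shortExact f
  have hkernel := ker_extCokerFactorThruImage (R := R) f M n
  cases n with
  | zero =>
    rw [ker_extPullback_g_zero hπ M, Submodule.map_bot] at hkernel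
    exact prop_of_injective P _ (LinearMap.ker_eq_bot.1 hkernel) hf
  | succ k =>
    refine prop_of_ker_le_range P (Submodule.mkQ _ ∘ₗ extConnecting hπ R M k)
      (extCokerFactorThruImage R f M (k + 1)) ?_ (hker k rfl) hf
    rw [hkernel, LinearMap.range_comp]
    exact Submodule.map_mono (ker_extPullback_g_succ_le hπ M k)

end PullbackCokernel

end Ext

section HomComplex

open Limits
open Abelian (Ext)
open Abelian.Ext

/-- The homology of a complex of modules `X₁ → X₂ → X₃`, computed from an injection `θ` with image
`ker (X₂ → X₃)`. -/
def homologyIsoOfRangeEqKer {X₁ X₂ X₃ Z : Type u} [AddCommGroup X₁] [Module R X₁]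
    [AddCommGroup X₂] [Module R X₂] [AddCommGroup X₃] [Module R X₃] [AddCommGroup Z] [Module R Z]
    {f : X₁ →ₗ[R] X₂} {g : X₂ →ₗ[R] X₃} (hfg : g ∘ₗ f = 0) (θ : Z →ₗ[R] X₂)
    (hθ : Function.Injective θ) (hrange : LinearMap.range θ = LinearMap.ker g)
    {B : Submodule R Z} (hB : (LinearMap.range f).comap θ = B) :
    (ShortComplex.moduleCatMk f g hfg).homology ≅ ModuleCat.of R (Z ⧸ B) :=
  let S := ShortComplex.moduleCatMk f g hfg
  let e : Z ≃ₗ[R] LinearMap.ker S.g.hom :=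
    (LinearEquiv.ofInjective θ hθ).trans (LinearEquiv.ofEq _ _ hrange)
  have he : B.map (e : Z →ₗ[R] LinearMap.ker S.g.hom) = LinearMap.range S.moduleCatToCycles := by
    rw [← hB]
    exact (Submodule.map_comap_eq_of_surjective e.surjective
      ((LinearMap.range f).comap (LinearMap.ker g).subtype)).trans
        (LinearMap.range_codRestrict _ _ _).symm
  S.moduleCatHomologyIso ≪≫ (Submodule.Quotient.equiv B _ e he).symm.toModuleIso

universe w

variable {C : Type w} [Category.{u} C] [Abelian C] [Linear R C] [HasExt.{u} C]
  (K : ChainComplex C ℕ)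

lemma extPullback_mk₀ {A B M : C} (f : A ⟶ B) (φ : B ⟶ M) :
    extPullback R f M 0 (mk₀ φ) = mk₀ (f ≫ φ) :=
  mk₀_comp_mk₀ f φ

variable (R) in
/-- Restriction along `K_i ↠ K_i / d K_{i+1}`. -/
def homOpcycles (M : C) (i : ℕ) : Ext (K.opcycles i) M 0 →ₗ[R] (K.X i ⟶ M) :=
  Linear.leftComp R M (K.pOpcycles i) ∘ₗ (linearEquiv₀ (R := R)).toLinearMap

lemma homOpcycles_mk₀ (M : C) (i : ℕ) (φ : K.opcycles i ⟶ M) :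
    homOpcycles R K M i (mk₀ φ) = K.pOpcycles i ≫ φ :=
  congrArg (K.pOpcycles i ≫ ·) ((linearEquiv₀ (R := R)).apply_symm_apply φ)

lemma homOpcycles_injective (M : C) (i : ℕ) : Function.Injective (homOpcycles R K M i) := by
  intro φ ψ h
  obtain ⟨φ, rfl⟩ := (mk₀_bijective _ _).2 φ
  obtain ⟨ψ, rfl⟩ := (mk₀_bijective _ _).2 ψ
  rw [homOpcycles_mk₀, homOpcycles_mk₀, cancel_epi] at h
  rw [h]

lemma range_homOpcycles (M : C) (i : ℕ) : LinearMap.range (homOpcycles R K M i) =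
    LinearMap.ker (Linear.leftComp R M (K.d ((ComplexShape.down ℕ).prev i) i)) := by
  refine le_antisymm ?_ fun φ hφ =>
    ⟨mk₀ (K.descOpcycles φ _ rfl hφ), (homOpcycles_mk₀ ..).trans (K.p_descOpcycles ..)⟩
  rintro _ ⟨φ, rfl⟩
  obtain ⟨φ, rfl⟩ := (mk₀_bijective _ _).2 φ
  simp [homOpcycles_mk₀]

lemma comap_homOpcycles_range (M : C) (i j : ℕ) :
    (LinearMap.range (Linear.leftComp R M (K.d i j))).comap (homOpcycles R K M i) =
      LinearMap.range (extPullback R (K.fromOpcycles i j) M 0) := by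
  ext φ
  obtain ⟨φ, rfl⟩ := (mk₀_bijective _ _).2 φ
  simp only [Submodule.mem_comap, LinearMap.mem_range, homOpcycles_mk₀, Linear.leftComp_apply,
    (mk₀_bijective _ _).2.exists, extPullback_mk₀, (mk₀_bijective _ _).1.eq_iff,
    ← K.p_fromOpcycles, Category.assoc, cancel_epi]

/-- `H^i(Hom(K, M))` is the cokernel of `Hom(K_{i-1}, M) → Hom(K_i / d K_{i+1}, M)`. -/
def linearYonedaObjHomologyIso (M : C) (i : ℕ) :
    (K.linearYonedaObj R M).homology i ≅
      extPullbackCoker R (K.fromOpcycles i ((ComplexShape.down ℕ).next i)) M 0 :=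
  homologyIsoOfRangeEqKer (by
    ext φ
    simp) (homOpcycles R K M i) (homOpcycles_injective K M i) (range_homOpcycles K M i)
    (comap_homOpcycles_range K M i _)

/-- The kernel of `K_i / d K_{i+1} → K_{i-1}` is the homology of `K`. -/
def kernelFromOpcyclesIso (i j : ℕ) (hij : (ComplexShape.down ℕ).next i = j) :
    K.homology i ≅ kernel (K.fromOpcycles i j) :=
  (K.homologyIsKernel i j hij).conePointUniqueUpToIso (limit.isLimit _)

/-- The cokernel of `K_i / d K_{i+1} → K_{i-1}` is `K_{i-1} / d K_i`. -/
def cokernelFromOpcyclesIso (i j : ℕ) (hij : (ComplexShape.down ℕ).prev j = i) :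
    cokernel (K.fromOpcycles i j) ≅ K.opcycles j :=
  (cokernelEpiComp (K.pOpcycles i) (K.fromOpcycles i j)).symm ≪≫
    cokernelIsoOfEq (K.p_fromOpcycles i j) ≪≫
    (colimit.isColimit _).coconePointUniqueUpToIso (K.opcyclesIsCokernel i j hij)

section Projective

variable [∀ i, Projective (K.X i)] (P : ObjectProperty (ModuleCat.{u} R)) [P.IsSerreClass] {M : C}
  {K}

lemma prop_extModule_opcycles {i j p : ℕ}
    (h : P (extPullbackCoker R (K.fromOpcycles i j) M (p + 1))) :
    P (extModule R (K.opcycles i) M (p + 1)) := by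
  refine prop_extModule_of_extPullback_eq_zero P (LinearMap.ext fun φ => ?_) h
  rw [eq_zero_of_projective φ, map_zero, map_zero]

lemma prop_extPullbackCoker_fromOpcycles {n : ℕ}
    (h : ∀ p q, p + q < n → P (extModule R (K.homology q) M p)) (i : ℕ) :
    ∀ j p, (ComplexShape.down ℕ).next i = j → p + i < n →
      P (extPullbackCoker R (K.fromOpcycles i j) M p) := by
  induction i with
  | zero =>
    exact fun j p _ hp =>
      prop_extPullbackCoker P (prop_extModule_of_iso P K.isoHomologyι₀ (h p 0 hp))
  | succ i ih =>
    rintro j p hj hp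
    obtain rfl : i = j := by simpa using hj
    refine prop_extPullbackCoker_of_kernel_cokernel P
      (prop_extModule_of_iso P (kernelFromOpcyclesIso K (i + 1) i (by simp)) (h p (i + 1) hp))
      (prop_extModule_of_iso P (cokernelFromOpcyclesIso K (i + 1) i (by simp)).symm ?_)
    exact prop_extModule_opcycles P (ih _ (p + 1) rfl (by lia))

lemma prop_homology_linearYonedaObj {n : ℕ}
    (h : ∀ p q, p + q < n → P (extModule R (K.homology q) M p)) (i : ℕ) (hi : i < n) :
    P ((K.linearYonedaObj R M).homology i) :=
  P.prop_of_iso (linearYonedaObjHomologyIso K M i).symm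
    (prop_extPullbackCoker_fromOpcycles P h i _ 0 rfl (by lia))

lemma prop_extPullbackCoker_of_homology {n : ℕ}
    (hKM : ∀ i < n, P ((K.linearYonedaObj R M).homology i))
    (hK : ∀ p q, p + q + 2 < n → P (extModule R (K.homology (q + 1)) M p)) (p : ℕ) :
    ∀ i j, (ComplexShape.down ℕ).next i = j → p + i < n →
      P (extPullbackCoker R (K.fromOpcycles i j) M p) := by
  induction p with
  | zero =>
    rintro i _ rfl hi
    exact P.prop_of_iso (linearYonedaObjHomologyIso K M i) (hKM i (by lia))
  | succ p ih =>
    intro i j _ hi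
    refine prop_extPullbackCoker P (prop_extModule_of_iso P
      (cokernelFromOpcyclesIso K (i + 1) i (by simp)) (prop_extModule_cokernel P ?_ ?_))
    · rintro k rfl
      exact prop_extModule_of_iso P (kernelFromOpcyclesIso K (i + 1) i (by simp))
        (hK k i (by lia))
    · exact ih (i + 1) i (by simp) (by lia)

lemma prop_extModule_homology_zero {n : ℕ}
    (hKM : ∀ i < n, P ((K.linearYonedaObj R M).homology i))
    (hK : ∀ p q, p + q + 2 < n → P (extModule R (K.homology (q + 1)) M p)) (p : ℕ) (hp : p < n) :
    P (extModule R (K.homology 0) M p) := by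
  refine prop_extModule_of_iso P K.isoHomologyι₀.symm
    (prop_extModule_of_extPullback_eq_zero P ?_
      (prop_extPullbackCoker_of_homology P hKM hK p 0 _ rfl (by lia)))
  rw [K.fromOpcycles_eq_zero (by simp)]
  ext φ
  simp

end Projective

end HomComplex

namespace IsCoherentRing

variable (hR : IsCoherentRing R)
include hR

lemma finitePresentation_of_injective_pi {k : ℕ} {N : Type u} [AddCommGroup N] [Module R N]
    [Module.Finite R N] (f : N →ₗ[R] (Fin k → R)) (hf : Function.Injective f) :
    Module.FinitePresentation R N := by
  induction k generalizing N with
  | zero =>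
    have : Subsingleton N := hf.subsingleton
    infer_instance
  | succ k ih =>
    let p : N →ₗ[R] R := LinearMap.proj 0 ∘ₗ f
    have : Module.FinitePresentation R (LinearMap.range p) :=
      hR _ (Module.Finite.iff_fg.1 (Module.Finite.range p))
    have : Module.Finite R (LinearMap.ker p.rangeRestrict) := Module.Finite.iff_fg.2
      (Module.FinitePresentation.fg_ker p.rangeRestrict p.surjective_rangeRestrict)
    have : Module.FinitePresentation R (LinearMap.ker p.rangeRestrict) := by
      refine ih (LinearMap.funLeft R R Fin.succ ∘ₗ f ∘ₗ
        (LinearMap.ker p.rangeRestrict).subtype) ?_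
      rintro ⟨m, hm⟩ ⟨m', hm'⟩ htail
      have hhead : f m 0 = f m' 0 :=
        (congrArg Subtype.val hm).trans (congrArg Subtype.val hm').symm
      exact Subtype.ext (hf (funext (Fin.cases hhead fun i => congrFun htail i)))
    exact Module.finitePresentation_of_ker p.rangeRestrict p.surjective_rangeRestrict

variable {M N : Type u} [AddCommGroup M] [Module R M] [AddCommGroup N] [Module R N]

lemma finitePresentation_of_fg [Module.FinitePresentation R N] {L : Submodule R N} (hL : L.FG) :
    Module.FinitePresentation R L := by
  obtain ⟨k, π, hπ⟩ := Module.Finite.exists_fin' R N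
  have hker : (LinearMap.ker π).FG := Module.FinitePresentation.fg_ker π hπ
  have hkerL : LinearMap.ker π ≤ L.comap π := π.ker_le_comap
  have : Module.Finite R (L.comap π) := Module.Finite.iff_fg.2
    (Submodule.fg_of_fg_map_of_fg_inf_ker π (by rwa [Submodule.map_comap_eq_of_surjective hπ])
      (by rwa [inf_eq_right.2 hkerL]))
  have : Module.FinitePresentation R (L.comap π) :=
    hR.finitePresentation_of_injective_pi (L.comap π).subtype (L.comap π).subtype_injective
  let πL : L.comap π →ₗ[R] L := π.restrict fun _ hx => hx
  refine Module.finitePresentation_of_surjective πL (fun ⟨y, hy⟩ => ?_) ?_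
  · obtain ⟨x, rfl⟩ := hπ y
    exact ⟨⟨x, hy⟩, rfl⟩
  · rw [LinearMap.ker_restrict]
    refine Submodule.fg_of_fg_map_injective _ (L.comap π).subtype_injective ?_
    rwa [Submodule.map_comap_subtype, inf_eq_right.2 hkerL]

lemma fg_ker [Module.FinitePresentation R M] [Module.FinitePresentation R N] (f : M →ₗ[R] N) :
    (LinearMap.ker f).FG := by
  have : Module.FinitePresentation R (LinearMap.range f) :=
    hR.finitePresentation_of_fg (Module.Finite.iff_fg.1 inferInstance)
  rw [← LinearMap.ker_rangeRestrict]
  exact Module.FinitePresentation.fg_ker f.rangeRestrict f.surjective_rangeRestrict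

lemma finitePresentation_ker [Module.FinitePresentation R M] [Module.FinitePresentation R N]
    (f : M →ₗ[R] N) : Module.FinitePresentation R (LinearMap.ker f) :=
  hR.finitePresentation_of_fg (hR.fg_ker f)

lemma finitePresentation_homology {ι : Type*} {c : ComplexShape ι}
    (K : HomologicalComplex (ModuleCat.{u} R) c) [∀ i, Module.FinitePresentation R (K.X i)]
    (i : ι) : Module.FinitePresentation R (K.homology i) := by
  let S := K.sc i
  have : Module.FinitePresentation R S.X₁ := inferInstanceAs (Module.FinitePresentation R (K.X _))
  have : Module.FinitePresentation R S.X₂ := inferInstanceAs (Module.FinitePresentation R (K.X _))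
  have : Module.FinitePresentation R S.X₃ := inferInstanceAs (Module.FinitePresentation R (K.X _))
  have := hR.finitePresentation_ker S.g.hom
  have hH : Module.FinitePresentation R
      (LinearMap.ker S.g.hom ⧸ LinearMap.range S.moduleCatToCycles) :=
    Module.finitePresentation_of_surjective _ (Submodule.mkQ_surjective _) (by
      rw [Submodule.ker_mkQ]
      exact Module.Finite.iff_fg.1 inferInstance)
  have : Module.FinitePresentation R S.moduleCatLeftHomologyData.H := hH
  exact .of_equiv S.moduleCatHomologyIso.symm.toLinearEquiv

end IsCoherentRing

section Annihilated

variable {N : Type u} [AddCommGroup N] [Module R N] {a : Ideal R}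

lemma exists_surjective_pi_quotient [Module.Finite R N] (haN : a ≤ Module.annihilator R N) :
    ∃ (k : ℕ) (f : (Fin k → R ⧸ a) →ₗ[R] N), Function.Surjective f := by
  have htorsion : Module.IsTorsionBySet R N a := fun x c => Module.mem_annihilator.1 (haN c.2) x
  let := htorsion.module
  have : IsScalarTower R (R ⧸ a) N := htorsion.isScalarTower
  have : Module.Finite (R ⧸ a) N := .of_restrictScalars_finite R _ _
  obtain ⟨k, f, hf⟩ := Module.Finite.exists_fin' (R ⧸ a) N
  exact ⟨k, f.restrictScalars R, hf⟩

variable (P : ObjectProperty (ModuleCat.{u} R)) [P.IsSerreClass] {M : ModuleCat.{u} R}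

lemma prop_extModule_prod {N' : Type u} [AddCommGroup N'] [Module R N'] {i : ℕ}
    (hN : P (extModule R (ModuleCat.of R N) M i)) (hN' : P (extModule R (ModuleCat.of R N') M i)) :
    P (extModule R (ModuleCat.of R (N × N')) M i) := by
  let S : ShortComplex (ModuleCat.{u} R) := .moduleCatMk (LinearMap.inl R N N')
    (LinearMap.snd R N N') (LinearMap.snd_comp_inl R N N')
  have hS : S.ShortExact :=
    { exact := (ShortComplex.moduleCat_exact_iff_range_eq_ker S).2 (LinearMap.range_inl R N N')
      mono_f := (ModuleCat.mono_iff_injective _).2 fun _ _ h => congrArg Prod.fst h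
      epi_g := (ModuleCat.epi_iff_surjective _).2 fun y => ⟨(0, y), rfl⟩ }
  exact prop_extModule_X₂ P hS hN hN'

lemma prop_extModule_pi {i : ℕ} (hN : P (extModule R (ModuleCat.of R N) M i)) (k : ℕ) :
    P (extModule R (ModuleCat.of R (Fin k → N)) M i) := by
  refine Module.pi_induction' R (motive := fun N _ _ => P (extModule R (ModuleCat.of R N) M i))
    (motive' := fun N _ _ => P (extModule R (ModuleCat.of R N) M i))
    (fun e => prop_extModule_of_iso P e.toModuleIso)
    (fun e => prop_extModule_of_iso P e.toModuleIso) ?_ (prop_extModule_prod P)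
    (fun _ => N) (fun _ => hN)
  exact prop_extModule_of_isZero P (ModuleCat.isZero_of_subsingleton _)

lemma prop_extModule_of_le_annihilator (hR : IsCoherentRing R) (ha : a.FG) {n : ℕ}
    (h : ∀ i < n, P (extModule R (ModuleCat.of R (R ⧸ a)) M i)) (i : ℕ) (hi : i < n)
    [Module.FinitePresentation R N] (haN : a ≤ Module.annihilator R N) :
    P (extModule R (ModuleCat.of R N) M i) := by
  induction i generalizing N with
  | zero =>
    obtain ⟨k, f, hf⟩ := exists_surjective_pi_quotient haN
    exact prop_extModule_X₃_zero P (LinearMap.shortExact_shortComplexKer hf)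
      (prop_extModule_pi P (h 0 hi) k)
  | succ i ih =>
    obtain ⟨k, f, hf⟩ := exists_surjective_pi_quotient haN
    have : Module.FinitePresentation R (R ⧸ a) :=
      Module.finitePresentation_of_surjective a.mkQ a.mkQ_surjective (by rwa [a.ker_mkQ])
    have := hR.finitePresentation_ker f
    have hker : a ≤ Module.annihilator R (LinearMap.ker f) := by
      refine le_trans (fun c hc => Module.mem_annihilator.2 fun y => funext fun m => ?_)
        ((LinearMap.ker f).subtype.annihilator_le_of_injective Subtype.val_injective)
      exact Module.mem_annihilator.1 (Ideal.annihilator_quotient (I := a) ▸ hc) (y m)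
    exact prop_extModule_X₃_succ P (LinearMap.shortExact_shortComplexKer hf)
      (ih (by lia) (N := LinearMap.ker f) hker) (prop_extModule_pi P (h (i + 1) hi) k)

end Annihilated

section Comparison

variable (P : ObjectProperty (ModuleCat.{u} R)) [P.IsSerreClass] {A M : ModuleCat.{u} R}

lemma forall_prop_homology_linearYonedaObj_iff (hR : IsCoherentRing R) {a : Ideal R} (ha : a.FG)
    (K : ChainComplex (ModuleCat.{u} R) ℕ) [∀ i, Projective (K.X i)]
    [∀ i, Module.FinitePresentation R (K.X i)]
    (hK : ∀ q, a ≤ Module.annihilator R (K.homology q))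
    (e : K.homology 0 ≅ ModuleCat.of R (R ⧸ a)) (n : ℕ) :
    (∀ i < n, P ((K.linearYonedaObj R M).homology i)) ↔
      ∀ i < n, P (extModule R (ModuleCat.of R (R ⧸ a)) M i) := by
  have hhomology {m : ℕ} (hExt : ∀ i < m, P (extModule R (ModuleCat.of R (R ⧸ a)) M i))
      (p q : ℕ) (hp : p < m) : P (extModule R (K.homology q) M p) :=
    have := hR.finitePresentation_homology K q
    prop_extModule_of_le_annihilator (N := K.homology q) P hR ha hExt p hp (hK q)
  refine ⟨fun hHom => ?_, fun hExt =>
    prop_homology_linearYonedaObj P fun p q _ => hhomology hExt p q (by lia)⟩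
  induction n with
  | zero => simp
  | succ n ih =>
    have hExt := ih fun i hi => hHom i (by lia)
    exact fun i hi => prop_extModule_of_iso P e
      (prop_extModule_homology_zero P hHom (fun p q _ => hhomology hExt p (q + 1) (by lia)) i hi)

/-- The homology in degree zero of a projective resolution of `A` is `A`. -/
def resolutionHomologyZeroIso (Q : ProjectiveResolution A) : Q.complex.homology 0 ≅ A :=
  isoOfQuasiIsoAt Q.π 0 ≪≫ HomologicalComplex.singleObjHomologySelfIso _ 0 A

lemma forall_prop_ext_iff (n : ℕ) :
    (∀ i < n, P (((Ext R (ModuleCat.{u} R) i).obj (.op A)).obj M)) ↔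
      ∀ i < n, P (extModule R A M i) := by
  let Q := projectiveResolution A
  have hQ (i : ℕ) := P.prop_iff_of_iso (Q.isoExt (R := R) i M)
  simp only [hQ]
  refine ⟨fun h i hi => prop_extModule_of_iso P (resolutionHomologyZeroIso Q)
    (prop_extModule_homology_zero P h (fun p q _ =>
      prop_extModule_of_isZero P (Q.complex_exactAt_succ q |>.isZero_homology)) i hi), fun h =>
    prop_homology_linearYonedaObj P fun p q hpq => ?_⟩
  cases q with
  | zero => exact prop_extModule_of_iso P (resolutionHomologyZeroIso Q).symm (h p hpq)
  | succ q => exact prop_extModule_of_isZero P (Q.complex_exactAt_succ q |>.isZero_homology)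

end Comparison

lemma mem_annihilator_homology {K : ChainComplex (ModuleCat.{u} R) ℕ} {c : R}
    (h : Homotopy (c • 𝟙 K) 0) (i : ℕ) : c ∈ Module.annihilator R (K.homology i) := by
  have hc : c • 𝟙 (K.homology i) = 0 := by
    rw [← HomologicalComplex.homologyMap_id, ← HomologicalComplex.homologyMap_zero K K i,
      ← h.homologyMap_eq i]
    exact (ShortComplex.homologyMap_smul _ c).symm
  exact Module.mem_annihilator.2 fun z => congrArg (fun f => f.hom z) hc

namespace Koszul

section Complex

variable {r : ℕ} (x : Fin r → R)

/-- The sign `(-1) ^ #{k ∈ t | k < j}` occurring in the Koszul differential. -/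
def sign (R : Type u) [CommRing R] (j : Fin r) (t : Finset (Fin r)) : R :=
  (-1) ^ (t.filter (fun k => k < j)).card

lemma sign_insert {i : Fin r} {t : Finset (Fin r)} (hi : i ∉ t) (j : Fin r) :
    sign R j (insert i t) = (if i < j then -1 else 1) * sign R j t := by
  unfold sign
  split_ifs with h
  · rw [Finset.filter_insert, if_pos h, Finset.card_insert_of_notMem (by simp [hi]), pow_succ']
  · rw [Finset.filter_insert, if_neg h, one_mul]

lemma sign_eq_of_mem {i : Fin r} {t : Finset (Fin r)} (hi : i ∈ t) (j : Fin r) :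
    sign R j t = (if i < j then -1 else 1) * sign R j (t.erase i) := by
  rw [← sign_insert (Finset.notMem_erase i t), Finset.insert_erase hi]

lemma sign_mul_self (j : Fin r) (t : Finset (Fin r)) : sign R j t * sign R j t = 1 := by
  rw [sign, ← mul_pow, neg_one_mul, neg_neg, one_pow]

lemma sign_insert_self (j : Fin r) (t : Finset (Fin r)) :
    sign R j (insert j t) = sign R j t := by
  rw [sign, sign, Finset.filter_insert, if_neg (lt_irrefl j)]

lemma sign_erase_self (j : Fin r) (t : Finset (Fin r)) :
    sign R j (t.erase j) = sign R j t := by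
  rw [sign, sign, Finset.filter_erase, Finset.erase_eq_of_notMem (by simp)]

lemma sign_mul_sign_erase {i j : Fin r} {t : Finset (Fin r)} (hi : i ∈ t) (hj : j ∈ t)
    (hij : i ≠ j) :
    sign R i t * sign R j (t.erase i) = -(sign R j t * sign R i (t.erase j)) := by
  rw [sign_eq_of_mem hi j, sign_eq_of_mem hj i]
  rcases lt_or_gt_of_ne hij with h | h <;> simp [h, h.not_gt, mul_comm]

lemma sign_mul_sign_insert {i j : Fin r} {t : Finset (Fin r)} (hi : i ∉ t) (hj : j ∈ t) :
    sign R i t * sign R j (insert i t) = -(sign R j t * sign R i (t.erase j)) := by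
  rw [sign_insert hi j, sign_eq_of_mem hj i]
  rcases lt_or_gt_of_ne (ne_of_mem_of_not_mem hj hi) with h | h <;> simp [h, h.not_gt, mul_comm]

/-- The degree `n` component of the Koszul complex, free on the `n`-element subsets of `Fin r`
rather than realized as an exterior power. -/
abbrev chains (R : Type u) [CommRing R] (r n : ℕ) : Type u :=
  {s : Finset (Fin r) // s.card = n} →₀ R

/-- The basis element of the degree `n` component attached to `s` if `s` has `n` elements, and
zero otherwise. -/
def basisElt (R : Type u) [CommRing R] (n : ℕ) (s : Finset (Fin r)) : chains R r n :=
  if h : s.card = n then Finsupp.single ⟨s, h⟩ 1 else 0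

lemma basisElt_of_card {n : ℕ} {s : Finset (Fin r)} (h : s.card = n) :
    basisElt R n s = Finsupp.single ⟨s, h⟩ 1 := dif_pos h

lemma basisElt_of_card_ne {n : ℕ} {s : Finset (Fin r)} (h : s.card ≠ n) :
    basisElt R n s = 0 := dif_neg h

lemma chains_hom_ext {n : ℕ} {M : Type*} [AddCommGroup M] [Module R M]
    {f g : chains R r n →ₗ[R] M} (h : ∀ s, s.card = n → f (basisElt R n s) = g (basisElt R n s)) :
    f = g := by
  refine Finsupp.lhom_ext' fun s => LinearMap.ext_ring ?_
  simpa [basisElt_of_card s.2] using h s.1 s.2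

/-- The Koszul differential. -/
def diff (n : ℕ) : chains R r (n + 1) →ₗ[R] chains R r n :=
  Finsupp.linearCombination R fun t => ∑ j ∈ t.1, (sign R j t.1 * x j) • basisElt R n (t.1.erase j)

lemma diff_basisElt (n : ℕ) (t : Finset (Fin r)) :
    diff x n (basisElt R (n + 1) t) =
      ∑ j ∈ t, (sign R j t * x j) • basisElt R n (t.erase j) := by
  by_cases h : t.card = n + 1
  · rw [basisElt_of_card h, diff, Finsupp.linearCombination_single, one_smul]
  · rw [basisElt_of_card_ne h, map_zero, Finset.sum_eq_zero]
    intro j hj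
    rw [basisElt_of_card_ne, smul_zero]
    have := Finset.card_erase_add_one hj
    omega

lemma diff_comp_diff (n : ℕ) : diff x n ∘ₗ diff x (n + 1) = 0 := by
  refine chains_hom_ext fun t _ => ?_
  simp only [LinearMap.comp_apply, diff_basisElt, map_sum, map_smul, Finset.smul_sum,
    LinearMap.zero_apply, smul_smul]
  rw [Finset.sum_sigma']
  refine Finset.sum_involution (fun p _ => ⟨p.2, p.1⟩) ?_ ?_ ?_ ?_
  · rintro ⟨i, j⟩ h
    simp only [Finset.mem_sigma, Finset.mem_erase] at h
    have hs := sign_mul_sign_erase (R := R) h.1 h.2.2 h.2.1.symm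
    rw [Finset.erase_right_comm (a := j) (b := i), ← add_smul]
    convert zero_smul R _
    linear_combination (x i * x j) * hs
  · rintro ⟨i, j⟩ h _ heq
    simp only [Finset.mem_sigma, Finset.mem_erase] at h
    exact h.2.1 (congrArg Sigma.fst heq)
  · rintro ⟨i, j⟩ h
    simp only [Finset.mem_sigma, Finset.mem_erase] at h ⊢
    exact ⟨h.2.2, h.2.1.symm, h.1⟩
  · rintro ⟨i, j⟩ _
    rfl

/-- The map `K_m → K_n` adjoining `p` to the index set, which is zero unless `n = m + 1`. These
maps form a null-homotopy of multiplication by `x p`. -/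
def homotopy (R : Type u) [CommRing R] (p : Fin r) (m n : ℕ) : chains R r m →ₗ[R] chains R r n :=
  Finsupp.linearCombination R fun t =>
    if p ∈ t.1 then 0 else sign R p t.1 • basisElt R n (insert p t.1)

lemma homotopy_basisElt (p : Fin r) (m : ℕ) (t : Finset (Fin r)) :
    homotopy R p m (m + 1) (basisElt R m t) =
      if p ∈ t then 0 else sign R p t • basisElt R (m + 1) (insert p t) := by
  by_cases h : t.card = m
  · rw [basisElt_of_card h, homotopy, Finsupp.linearCombination_single, one_smul]
  · rw [basisElt_of_card_ne h, map_zero]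
    split_ifs with hp
    · rfl
    · rw [basisElt_of_card_ne, smul_zero]
      simpa [Finset.card_insert_of_notMem hp] using h

lemma homotopy_eq_zero (p : Fin r) {m n : ℕ} (hmn : m + 1 ≠ n) : homotopy R p m n = 0 := by
  refine chains_hom_ext fun t ht => ?_
  rw [basisElt_of_card ht, homotopy, Finsupp.linearCombination_single, one_smul]
  split_ifs with hp
  · rfl
  · rw [basisElt_of_card_ne, smul_zero, LinearMap.zero_apply]
    rwa [Finset.card_insert_of_notMem hp, ht]

lemma diff_homotopy_basisElt_of_notMem {p : Fin r} (n : ℕ) {t : Finset (Fin r)} (hp : p ∉ t) :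
    diff x n (homotopy R p n (n + 1) (basisElt R n t)) = x p • basisElt R n t +
      ∑ j ∈ t, (sign R p t * sign R j (insert p t) * x j) •
        basisElt R n (insert p (t.erase j)) := by
  rw [homotopy_basisElt, if_neg hp, map_smul, diff_basisElt, Finset.sum_insert hp, smul_add,
    Finset.smul_sum, smul_smul, sign_insert_self, Finset.erase_insert hp, ← mul_assoc,
    sign_mul_self, one_mul]
  congr 1
  refine Finset.sum_congr rfl fun j hj => ?_
  rw [smul_smul, ← mul_assoc, Finset.erase_insert_of_ne (ne_of_mem_of_not_mem hj hp).symm]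

lemma homotopy_diff_basisElt_of_mem {p : Fin r} (n : ℕ) {t : Finset (Fin r)} (hp : p ∈ t) :
    homotopy R p n (n + 1) (diff x n (basisElt R (n + 1) t)) = x p • basisElt R (n + 1) t := by
  rw [diff_basisElt, map_sum, Finset.sum_eq_single_of_mem p hp]
  · rw [map_smul, homotopy_basisElt, if_neg (Finset.notMem_erase p t), smul_smul,
      sign_erase_self, Finset.insert_erase hp, mul_right_comm, sign_mul_self, one_mul]
  · intro j _ hjp
    rw [map_smul, homotopy_basisElt, if_pos (Finset.mem_erase.2 ⟨hjp.symm, hp⟩), smul_zero]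

lemma homotopy_diff_basisElt_of_notMem {p : Fin r} (n : ℕ) {t : Finset (Fin r)} (hp : p ∉ t) :
    homotopy R p n (n + 1) (diff x n (basisElt R (n + 1) t)) =
      ∑ j ∈ t, (sign R j t * sign R p (t.erase j) * x j) •
        basisElt R (n + 1) (insert p (t.erase j)) := by
  rw [diff_basisElt, map_sum]
  refine Finset.sum_congr rfl fun j _ => ?_
  rw [map_smul, homotopy_basisElt, if_neg (fun h => hp (Finset.mem_of_mem_erase h)), smul_smul,
    mul_right_comm]

lemma diff_homotopy_zero (p : Fin r) : diff x 0 ∘ₗ homotopy R p 0 1 = x p • LinearMap.id := by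
  refine chains_hom_ext fun t ht => ?_
  obtain rfl := Finset.card_eq_zero.1 ht
  simp [diff_homotopy_basisElt_of_notMem]

lemma homotopy_diff_add_diff_homotopy (p : Fin r) (n : ℕ) :
    homotopy R p n (n + 1) ∘ₗ diff x n + diff x (n + 1) ∘ₗ homotopy R p (n + 1) (n + 2) =
      x p • LinearMap.id := by
  refine chains_hom_ext fun t _ => ?_
  simp only [LinearMap.add_apply, LinearMap.comp_apply, LinearMap.smul_apply, LinearMap.id_apply]
  by_cases hp : p ∈ t
  · rw [homotopy_diff_basisElt_of_mem x n hp, homotopy_basisElt, if_pos hp, map_zero, add_zero]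
  · rw [homotopy_diff_basisElt_of_notMem x n hp, diff_homotopy_basisElt_of_notMem x (n + 1) hp,
      add_left_comm, ← Finset.sum_add_distrib, Finset.sum_eq_zero, add_zero]
    intro j hj
    rw [sign_mul_sign_insert hp hj, neg_mul, neg_smul, add_neg_cancel]

/-- The Koszul complex of a finite family of elements. -/
def complex : ChainComplex (ModuleCat.{u} R) ℕ :=
  ChainComplex.of (fun n => ModuleCat.of R (chains R r n)) (fun n => ModuleCat.ofHom (diff x n))
    (fun n => by
      rw [← ModuleCat.ofHom_comp, diff_comp_diff]
      rfl)

lemma complex_d (n : ℕ) : (complex x).d (n + 1) n = ModuleCat.ofHom (diff x n) :=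
  ChainComplex.of_d (fun n => ModuleCat.of R (chains R r n))
    (fun n => ModuleCat.ofHom (diff x n)) n

instance projective_complex_X (n : ℕ) : Projective ((complex x).X n) :=
  inferInstanceAs (Projective (ModuleCat.of R (chains R r n)))

instance finitePresentation_complex_X (n : ℕ) : Module.FinitePresentation R ((complex x).X n) :=
  inferInstanceAs (Module.FinitePresentation R (chains R r n))

/-- Multiplication by `x p` on the Koszul complex is null-homotopic. -/
def smulHomotopyZero (p : Fin r) : Homotopy (x p • 𝟙 (complex x)) 0 :=
  let h (m n : ℕ) : (complex x).X m ⟶ (complex x).X n := ModuleCat.ofHom (homotopy R p m n)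
  { hom := h
    zero := fun m n hmn => congrArg ModuleCat.ofHom (homotopy_eq_zero p hmn)
    comm := fun n => by
      cases n with
      | zero =>
        have hd : h 0 1 ≫ (complex x).d 1 0 = x p • 𝟙 _ := by
          rw [complex_d]
          exact ModuleCat.hom_ext (diff_homotopy_zero x p)
        rw [Homotopy.dNext_zero_chainComplex, Homotopy.prevD_chainComplex, hd]
        simp
      | succ n =>
        have hd : (complex x).d (n + 1) n ≫ h n (n + 1) +
            h (n + 1) (n + 2) ≫ (complex x).d (n + 2) (n + 1) = x p • 𝟙 _ := by
          rw [complex_d, complex_d]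
          exact ModuleCat.hom_ext (homotopy_diff_add_diff_homotopy x p n)
        rw [Homotopy.dNext_succ_chainComplex, Homotopy.prevD_chainComplex, hd]
        simp }

lemma span_le_annihilator_homology (n : ℕ) :
    Ideal.span (Set.range x) ≤ Module.annihilator R ((complex x).homology n) := by
  rw [Ideal.span_le, Set.range_subset_iff]
  exact fun p => mem_annihilator_homology (smulHomotopyZero x p) n

/-- The augmentation `K_0 = R → R / 𝔞` of the Koszul complex. -/
def augmentation (a : Ideal R) : chains R r 0 →ₗ[R] R ⧸ a :=
  Finsupp.linearCombination R fun _ => (1 : R ⧸ a)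

lemma augmentation_smul_basisElt (a : Ideal R) (c : R) :
    augmentation a (c • basisElt R 0 (∅ : Finset (Fin r))) = Ideal.Quotient.mk a c := by
  rw [basisElt_of_card Finset.card_empty, map_smul, augmentation,
    Finsupp.linearCombination_single, one_smul, Algebra.smul_def, mul_one]
  rfl

lemma exists_eq_smul_basisElt (z : chains R r 0) : ∃ c : R, z = c • basisElt R 0 ∅ := by
  refine ⟨z ⟨∅, Finset.card_empty⟩, ?_⟩
  rw [basisElt_of_card Finset.card_empty, Finsupp.smul_single, smul_eq_mul, mul_one]
  ext ⟨s, hs⟩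
  obtain rfl := Finset.card_eq_zero.1 hs
  rw [Finsupp.single_eq_same]

lemma augmentation_surjective (a : Ideal R) :
    Function.Surjective (augmentation (r := r) a) := fun y => by
  obtain ⟨c, rfl⟩ := Ideal.Quotient.mk_surjective y
  exact ⟨_, augmentation_smul_basisElt _ c⟩

lemma range_diff_zero :
    LinearMap.range (diff x 0) = LinearMap.ker (augmentation (Ideal.span (Set.range x))) := by
  refine le_antisymm (LinearMap.range_le_ker_iff.2 (chains_hom_ext fun t ht => ?_)) fun z hz => ?_
  · obtain ⟨j, rfl⟩ := Finset.card_eq_one.1 ht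
    rw [LinearMap.comp_apply, diff_basisElt, Finset.sum_singleton, Finset.erase_singleton,
      augmentation_smul_basisElt, LinearMap.zero_apply, Ideal.Quotient.eq_zero_iff_mem]
    exact Ideal.mul_mem_left _ _ (Ideal.subset_span ⟨j, rfl⟩)
  · obtain ⟨c, rfl⟩ := exists_eq_smul_basisElt z
    rw [LinearMap.mem_ker, augmentation_smul_basisElt, Ideal.Quotient.eq_zero_iff_mem] at hz
    suffices h : Ideal.span (Set.range x) ≤
        (LinearMap.range (diff x 0)).comap (LinearMap.toSpanSingleton R _ (basisElt R 0 ∅)) from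
      h hz
    rw [Ideal.span_le, Set.range_subset_iff]
    exact fun p => ⟨_, LinearMap.congr_fun (diff_homotopy_zero x p) (basisElt R 0 ∅)⟩

/-- The homology in degree zero of the Koszul complex is `R / (x₁, …, x_r)`. -/
def homologyZeroIso :
    (complex x).homology 0 ≅ ModuleCat.of R (R ⧸ Ideal.span (Set.range x)) :=
  (complex x).isoHomologyι₀ ≪≫
    ((complex x).opcyclesIsCokernel 1 0 (by simp)).coconePointUniqueUpToIso
      (Limits.colimit.isColimit _) ≪≫
    ModuleCat.cokernelIsoRangeQuotient ((complex x).d 1 0) ≪≫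
    ((Submodule.quotEquivOfEq _ _ (by rw [complex_d]; exact range_diff_zero x)).trans
      ((augmentation (Ideal.span (Set.range x))).quotKerEquivOfSurjective
        (augmentation_surjective _))).toModuleIso

end Complex

section Cohomology

variable {r : ℕ} (x : Fin r → R) (M : Type u) [AddCommGroup M] [Module R M]

/-- Morphisms from the degree `n` component of the Koszul complex to `M`, as families indexed by
the `n`-element subsets. -/
def homEquiv (n : ℕ) : ((complex x).X n ⟶ ModuleCat.of R M) ≃ₗ[R]
    ({s : Finset (Fin r) // s.card = n} → M) :=
  ModuleCat.homLinearEquiv.trans (Finsupp.llift M R R _).symm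

lemma koszulDiff_homEquiv (n : ℕ) (φ : (complex x).X n ⟶ ModuleCat.of R M) :
    koszulDiff x M n (homEquiv x M n φ) =
      homEquiv x M (n + 1) ((complex x).d (n + 1) n ≫ φ) := by
  rw [complex_d]
  ext ⟨t, ht⟩
  have h : φ.hom (diff x n (basisElt R (n + 1) t)) =
      ∑ j ∈ t, (sign R j t * x j) • φ.hom (basisElt R n (t.erase j)) := by
    rw [diff_basisElt]
    exact (map_sum φ.hom _ _).trans (Finset.sum_congr rfl fun j _ => map_smul φ.hom _ _)
  rw [← Finset.sum_attach, basisElt_of_card ht] at h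
  refine Eq.trans (Finset.sum_congr rfl fun j _ => ?_) h.symm
  rw [basisElt_of_card (by rw [Finset.card_erase_of_mem j.2, ht, Nat.add_sub_cancel])]
  rfl

lemma koszulDiff_comp_homEquiv (n : ℕ) :
    koszulDiff x M n ∘ₗ (homEquiv x M n).toLinearMap = (homEquiv x M (n + 1)).toLinearMap ∘ₗ
      Linear.leftComp R (ModuleCat.of R M) ((complex x).d (n + 1) n) :=
  LinearMap.ext (koszulDiff_homEquiv x M n)

lemma range_koszulDiffIn_zero : LinearMap.range (koszulDiffIn x M 0) = ⊥ := by
  rw [LinearMap.range_eq_bot]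
  refine LinearMap.ext fun φ => funext fun ⟨t, ht⟩ => ?_
  obtain rfl := Finset.card_eq_zero.1 ht
  rfl

lemma range_koszulDiffIn_succ (n : ℕ) :
    LinearMap.range (koszulDiffIn x M (n + 1)) = LinearMap.range (koszulDiff x M n) := by
  ext φ
  constructor
  · rintro ⟨ψ, rfl⟩
    exact ⟨fun s => ψ ⟨s.1, by rw [s.2]⟩, rfl⟩
  · rintro ⟨ψ, rfl⟩
    exact ⟨fun s => ψ ⟨s.1, Nat.succ_injective s.2⟩, rfl⟩

lemma map_homEquiv_ker_leftComp_d (n : ℕ) :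
    (LinearMap.ker (Linear.leftComp R (ModuleCat.of R M)
      ((complex x).d ((ComplexShape.down ℕ).prev n) n))).map (homEquiv x M n).toLinearMap =
      LinearMap.ker (koszulDiff x M n) := by
  rw [ChainComplex.prev, ← LinearEquiv.ker_comp (homEquiv x M (n + 1)),
    ← koszulDiff_comp_homEquiv, LinearMap.ker_comp,
    Submodule.map_comap_eq_of_surjective (homEquiv x M n).surjective]

lemma map_homEquiv_range_leftComp_d (n : ℕ) :
    (LinearMap.range (Linear.leftComp R (ModuleCat.of R M)
      ((complex x).d n ((ComplexShape.down ℕ).next n)))).map (homEquiv x M n).toLinearMap =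
      LinearMap.range (koszulDiffIn x M n) := by
  cases n with
  | zero =>
    rw [range_koszulDiffIn_zero, (complex x).shape _ _ (by simp)]
    have h : Linear.leftComp R (ModuleCat.of R M)
      (0 : (complex x).X 0 ⟶ (complex x).X ((ComplexShape.down ℕ).next 0)) = 0 := by
      ext φ
      simp
    rw [h, LinearMap.range_zero, Submodule.map_bot]
  | succ n =>
    rw [ChainComplex.next_nat_succ, range_koszulDiffIn_succ, ← LinearMap.range_comp,
      ← koszulDiff_comp_homEquiv, LinearMap.range_comp_of_range_eq_top _ (homEquiv x M n).range]

/-- The cohomology of `Hom(K, M)` for the Koszul complex `K` is the Koszul cohomology of `M`. -/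
def homologyLinearYonedaObjIso (n : ℕ) :
    ((complex x).linearYonedaObj R (ModuleCat.of R M)).homology n ≅
      ModuleCat.of R (koszulCohomology x M n) :=
  homologyIsoOfRangeEqKer
    (f := Linear.leftComp R _ ((complex x).d n ((ComplexShape.down ℕ).next n)))
    (g := Linear.leftComp R _ ((complex x).d ((ComplexShape.down ℕ).prev n) n))
    (by
      ext φ
      simp)
    ((homEquiv x M n).symm.toLinearMap ∘ₗ (LinearMap.ker (koszulDiff x M n)).subtype)
    ((homEquiv x M n).symm.injective.comp Subtype.val_injective)
    (by
      rw [LinearMap.range_comp, Submodule.range_subtype, ← map_homEquiv_ker_leftComp_d,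
        ← Submodule.map_comp, LinearEquiv.symm_comp, Submodule.map_id])
    (by
      rw [Submodule.comap_comp, ← map_homEquiv_range_leftComp_d,
        Submodule.map_equiv_eq_comap_symm])

end Cohomology

end Koszul

lemma sInf_image_natCast_congr {s t : Set ℕ} (h : ∀ n, (∀ i < n, i ∉ s) ↔ ∀ i < n, i ∉ t) :
    sInf ((↑· : ℕ → ℕ∞) '' s) = sInf ((↑· : ℕ → ℕ∞) '' t) := by
  have le_of_forall {s t : Set ℕ} (h : ∀ n, (∀ i < n, i ∉ s) → ∀ i < n, i ∉ t) :
      sInf ((↑· : ℕ → ℕ∞) '' s) ≤ sInf ((↑· : ℕ → ℕ∞) '' t) := by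
    rw [le_sInf_iff, Set.forall_mem_image]
    intro m hm
    by_contra! hlt
    refine h (m + 1) (fun i hi his => ?_) m m.lt_succ_self hm
    exact (hlt.trans_le (sInf_le ⟨i, his, rfl⟩)).not_ge (Nat.cast_le.2 (Nat.lt_succ_iff.1 hi))
  exact le_antisymm (le_of_forall fun n => (h n).1) (le_of_forall fun n => (h n).2)

theorem tKgrade_eq_tEgrade_general (hR : IsCoherentRing R) (P : ObjectProperty (ModuleCat.{u} R))
    [P.IsSerreClass] (M : Type u) [AddCommGroup M] [Module R M] {r : ℕ} (x : Fin r → R) :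
    TKgrade {N | P N} x M = TEgrade {N | P N} (Ideal.span (Set.range x)) M := by
  refine sInf_image_natCast_congr fun n => ?_
  simp only [Set.mem_ofPred_eq, not_not,
    ← P.prop_iff_of_iso (Koszul.homologyLinearYonedaObjIso x M _)]
  rw [forall_prop_ext_iff P]
  exact forall_prop_homology_linearYonedaObj_iff P hR (Submodule.fg_span (Set.finite_range x))
    (Koszul.complex x) (Koszul.span_le_annihilator_homology x) (Koszul.homologyZeroIso x) n

/-- **Theorem (Koszul grade = Ext grade over coherent rings).** Let `R` be a coherent
commutative ring, `𝔗` a torsion theory of `R`-modules, `𝔞` a finitely generated ideal of `R`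
(generated by `x₁, …, x_r`) and `M` an `R`-module. Then
`𝔗-Kgrade_R(𝔞, M) = 𝔗-Egrade_R(𝔞, M)`. -/
theorem tKgrade_eq_tEgrade (hR : IsCoherentRing R) (T : Set (ModuleCat.{u} R))
    (hT : IsTorsionTheory R T) (a : Ideal R) (M : Type u) [AddCommGroup M] [Module R M]
    {r : ℕ} (x : Fin r → R) (hx : Ideal.span (Set.range x) = a) :
    TKgrade T x M = TEgrade T a M := by
  rcases T.eq_empty_or_nonempty with rfl | hne
  · simp [TKgrade, TEgrade]
  · have := hT.isSerreClass hne
    exact hx ▸ tKgrade_eq_tEgrade_general hR (fun N => N ∈ T) M x
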